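/- arXiv:1902.07426 — 2 statements merged into one kernel-verified Lean document; each statement's English description precedes it below -/
import Mathlib

section
/- There is a universal constant C > 0 such that the following holds. Let ε ∈ (0,1/2], δ ∈ (0,1/2], let r ≥ ℓ ≥ 1 be integers, and let g : ({0,1}^n)^ℓ → {0,1} be an ℓ-round coin-flipping protocol in which round i is endowed with a product measure μ_i on {0,1}^n. Suppose D is a probability distribution on subsets of [n] such that for every (ℓ−1)-round protocol g' : ({0,1}^n)^{ℓ−1} → {0,1} over μ_2 × ... × μ_ℓ there exists b' ∈ {0,1} with Pr_{T∼D}[ I_{T}^{b'}(g') ≥ 1 − ε/2^{r−ℓ+1} ] ≥ δ. Then there exists b ∈ {0,1} such that for every integer k ≥ C·ε^{-3}·4^{r−ℓ}·log(2r)·log(2/δ)·log log(4/δ), taking S ∼ μ_1^{(k)} and T ∼ D independently, Pr_{S,T}[ I_{S∪T}^b(g) ≥ 1 − ε/2^{r−ℓ} ] ≥ δ/(4·log(1/ε) + 4r). -/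
open MeasureTheory
open scoped ENNReal

/-- An `(n,r)`-strategy for a coalition `B`: in round `i`, given the bits broadcast by the
players outside `B` in the first `i+1` rounds, it chooses the bits of the players in `B`
(coordinates outside `B` of the output are irrelevant). -/
def Strategy (n r : ℕ) (B : Finset (Fin n)) : Type :=
  (i : Fin r) → (Fin (i.val + 1) → ({j : Fin n // j ∉ B} → Bool)) → (Fin n → Bool)

/-- The transcript of the protocol when the good players broadcast according to `α` and the
coalition `B` follows strategy `π` (with rushing: in round `i` the coalition sees the good
players' round-`i` bits). -/
def execP {n r : ℕ} (B : Finset (Fin n)) (π : Strategy n r B)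
    (α : Fin r → Fin n → Bool) : Fin r → Fin n → Bool :=
  fun i j =>
    if j ∈ B then
      π i (fun k => fun j' =>
        α ⟨k.val, by have hk := k.isLt; have hi := i.isLt; omega⟩ j'.val) j
    else α i j

/-- `I_{π,B}^b(f)`: the probability that the output is `b` when the coalition `B` follows `π`.
The good players' bits are sampled from the product measure `⨂_i ⨂_j μs i j`; since the
transcript and the strategy only depend on the coordinates outside `B`, this agrees with
sampling only the coordinates outside `B`. -/
noncomputable def IPi {n r : ℕ} (μs : Fin r → Fin n → Measure Bool)
    (f : (Fin r → Fin n → Bool) → Bool) (B : Finset (Fin n)) (π : Strategy n r B)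
    (b : Bool) : ℝ≥0∞ :=
  (Measure.pi fun i => Measure.pi fun j => μs i j) {α | f (execP B π α) = b}

/-- `I_B^b(f)`: the influence of coalition `B` towards `b`, i.e. the supremum over strategies
of the probability that the output is `b`. -/
noncomputable def IB {n r : ℕ} (μs : Fin r → Fin n → Measure Bool)
    (f : (Fin r → Fin n → Bool) → Bool) (B : Finset (Fin n)) (b : Bool) : ℝ :=
  (⨆ π : Strategy n r B, IPi μs f B π b).toReal

/-- The `j`-times iterated base-2 logarithm. -/
noncomputable def iterLog : ℕ → ℝ → ℝ
  | 0, x => x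
  | (j+1), x => Real.logb 2 (iterLog j x)

/-- `log* x`: the least `j` with `log^{(j)} x ≤ 1`. -/
noncomputable def logStar (x : ℝ) : ℕ := sInf {j : ℕ | iterLog j x ≤ 1}

/-- The boosted measure `μ^(k)`: the distribution of `x¹ ∨ ⋯ ∨ xᵏ` for i.i.d. `xⁱ ∼ μ`. -/
noncomputable def boost {n : ℕ} (μ : Measure (Fin n → Bool)) (t : ℕ) :
    Measure (Fin n → Bool) :=
  (Measure.pi fun _ : Fin t => μ).map (fun xs i => Finset.univ.sup fun j => xs j i)

/-- The support of `x ∈ {0,1}^n` viewed as a subset of `[n]`. -/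
def supp {n : ℕ} (x : Fin n → Bool) : Finset (Fin n) :=
  Finset.univ.filter fun i => x i = true

/-!
Draw `K` samples of the first round and fix its bits to be their join. Applied to the remaining
rounds, the hypothesis gives an output `b` for which, with substantial probability, the join lies in
the set `A` of first-round bits after which `T` is likely to force `b`. Each sample can then be
moved into `A` by changing only coordinates in the support of the join of the other samples.

For `t = 0, ..., K`, consider the event that each of `t` tested samples can be moved into `A` using
the other samples among `2 * K - t`. At `t = K` it is at least as likely as the join lying in `A`,
so some step from `t` to `t + 1` keeps at least the fraction `1 - η / 4` of its probability.
By exchangeability, testing the sample that this step discards, instead of a remaining one, keeps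
no less. Hence the remaining samples mostly have a join `S` that allows all but a fraction `η` of
the first-round inputs to be moved into `A`. The coalition `supp S ∪ T` moves the first round into
`A` and then plays the strategy of `T`; either part fails with probability at most `η`.
-/

open ProbabilityTheory

section ProductMeasures

variable {ι κ : Type*} [Fintype ι] [Fintype κ]

theorem map_pi_comp_injective {X : Type*} [MeasurableSpace X] (μ : Measure X)
    [IsProbabilityMeasure μ] {e : ι → κ} (he : e.Injective) :
    (Measure.pi fun _ : κ => μ).map (fun x => x ∘ e) = Measure.pi fun _ : ι => μ := by
  have hindep : iIndepFun (fun i (x : κ → X) => x (e i)) (Measure.pi fun _ => μ) :=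
    (iIndepFun_pi (X := fun _ => id) fun _ => aemeasurable_id).precomp he
  rw [iIndepFun_iff_map_fun_eq_pi_map fun i => (measurable_pi_apply (e i)).aemeasurable] at hindep
  exact hindep.trans <| congrArg _ <| funext fun i =>
    (measurePreserving_eval (fun _ : κ => μ) (e i)).map_eq

theorem mul_pi_le_pi_inter_eval {X : ι → Type*} [∀ i, MeasurableSpace (X i)]
    (μ : ∀ i, Measure (X i)) [∀ i, IsProbabilityMeasure (μ i)] {a : ι} {E : Set (∀ i, X i)}
    {H : (∀ i, X i) → Set (X a)} (hE : DependsOn (· ∈ E) {a}ᶜ) (hH : DependsOn H {a}ᶜ)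
    (hEm : MeasurableSet E) (hHm : MeasurableSet {x | x a ∈ H x}) {c : ℝ≥0∞}
    (hc : ∀ x ∈ E, c ≤ μ a (H x)) :
    c * Measure.pi μ E ≤ Measure.pi μ (E ∩ {x | x a ∈ H x}) := by
  classical
  rw [← lintegral_indicator_const hEm, ← lintegral_indicator_one (hEm.inter hHm)]
  refine lintegral_le_of_lmarginal_le {a} (measurable_const.indicator hEm)
    (measurable_one.indicator (hEm.inter hHm)) fun x => ?_
  have hupdate (z : X a) : ∀ i ∈ ({a}ᶜ : Set ι), Function.update x a z i = x i :=
    fun i hi => Function.update_of_ne hi z x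
  have hE' (z : X a) : Function.update x a z ∈ E ↔ x ∈ E := (hE (hupdate z)).to_iff
  have hH' (z : X a) : H (Function.update x a z) = H x := hH (hupdate z)
  rw [lmarginal_singleton, lmarginal_singleton]
  by_cases hx : x ∈ E
  · calc ∫⁻ z, E.indicator (fun _ => c) (Function.update x a z) ∂μ a
        = c := by simp [hE', hx]
      _ ≤ μ a (H x) := hc x hx
      _ = ∫⁻ z, (H x).indicator 1 z ∂μ a := by
        have hset : (Function.update x a) ⁻¹' {y | y a ∈ H y} = H x := by ext; simp [hH']
        exact (lintegral_indicator_one (hset ▸ measurable_update x hHm)).symm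
      _ = ∫⁻ z, (E ∩ {x | x a ∈ H x}).indicator 1 (Function.update x a z) ∂μ a := by
        simp [Set.indicator_apply, hE', hH', hx]
  · simp [hE', hx]

theorem measureReal_pi_fin_succ {m : ℕ} {X : Fin (m + 1) → Type*} [∀ i, MeasurableSpace (X i)]
    (μ : ∀ i, Measure (X i)) [∀ i, IsProbabilityMeasure (μ i)] {E : Set (∀ i, X i)}
    (hE : MeasurableSet E) :
    (Measure.pi μ).real E =
      ∫ x, (Measure.pi fun i : Fin m => μ i.succ).real {y | Fin.cons x y ∈ E} ∂μ 0 := by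
  have hmp := (measurePreserving_piFinSuccAbove μ 0).symm
  have hE' := hmp.measurable hE
  rw [← hmp.measureReal_preimage hE.nullMeasurableSet, measureReal_def,
    Measure.prod_apply hE', ← integral_toReal (measurable_measure_prodMk_left hE').aemeasurable
      (.of_forall fun _ => measure_lt_top _ _)]
  refine integral_congr_ae <| .of_forall fun x => congrArg (Measure.real _) ?_
  ext y
  exact iff_of_eq <| congrArg (· ∈ E) (Fin.insertNth_zero x y)

theorem measurePreserving_pi_prodMk {X Y Z : Type*} [MeasurableSpace X] [MeasurableSpace Y]
    [MeasurableSpace Z] {μ : ι → Measure X} {ν : ι → Measure Y} {ρ : ι → Measure Z}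
    [∀ i, SigmaFinite (μ i)] [∀ i, SigmaFinite (ν i)] [∀ i, SigmaFinite (ρ i)]
    {f : ι → X × Y → Z} (hf : ∀ i, MeasurePreserving (f i) ((μ i).prod (ν i)) (ρ i)) :
    MeasurePreserving (fun (p : (ι → X) × (ι → Y)) i => f i (p.1 i, p.2 i))
      ((Measure.pi μ).prod (Measure.pi ν)) (Measure.pi ρ) :=
  (measurePreserving_pi _ _ hf).comp (measurePreserving_arrowProdEquivProdArrow X Y ι μ ν).symm

end ProductMeasures

theorem exists_mul_le_succ {d : ℕ → ℝ} {c : ℝ} (hc : 0 ≤ c) {K : ℕ} (hK : 0 < K) (h0 : d 0 ≤ 1)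
    (h : c ^ K ≤ d K) : ∃ t < K, c * d t ≤ d (t + 1) := by
  by_contra! hlt
  exact ((lt_geom hc hK hlt).trans_le (mul_le_of_le_one_right (pow_nonneg hc K) h0)).not_ge h

theorem dependsOn_sup {X ι : Type*} [SemilatticeSup X] [OrderBot X] (I : Finset ι) :
    DependsOn (fun x : ι → X => I.sup x) I :=
  fun _ _ h => Finset.sup_congr rfl h

section LeaveOneOut

variable {X ι κ : Type*} [SemilatticeSup X] [OrderBot X] [DecidableEq ι] [DecidableEq κ]
  {R : X → Set X}

/-- The tuples in which every coordinate indexed by `J` is accepted by `R`, given the join of the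
other coordinates indexed by `I`. The two index sets are separate so that the exchangeability
argument can enlarge them one element at a time. -/
def leaveOneOut (R : X → Set X) (I J : Finset ι) : Set (ι → X) :=
  {x | ∀ i ∈ J, x i ∈ R ((I.erase i).sup x)}

theorem leaveOneOut_subset_leaveOneOut (hR : Monotone R) {I I' J J' : Finset ι} (hI : I ⊆ I')
    (hJ : J' ⊆ J) : leaveOneOut R I J ⊆ leaveOneOut R I' J' := fun _ hx i hi =>
  hR (Finset.sup_mono (Finset.erase_subset_erase i hI)) (hx i (hJ hi))

theorem comp_mem_leaveOneOut_iff (R : X → Set X) (e : ι ↪ κ) (I J : Finset ι) (x : κ → X) :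
    x ∘ e ∈ leaveOneOut R I J ↔ x ∈ leaveOneOut R (I.map e) (J.map e) := by
  simp [leaveOneOut, ← Finset.map_erase, Finset.sup_map]

theorem dependsOn_mem_leaveOneOut (R : X → Set X) (I J : Finset ι) :
    DependsOn (· ∈ leaveOneOut R I J) (I ∪ J : Set ι) := by
  intro x y h
  refine propext <| forall₂_congr fun i hi => ?_
  have hsup : (I.erase i).sup x = (I.erase i).sup y := dependsOn_sup (I.erase i) fun l hl =>
    h l (Or.inl (Finset.mem_of_mem_erase hl))
  rw [h i (Or.inr hi), hsup]

variable [Countable X] [MeasurableSpace X] [DiscreteMeasurableSpace X] [Fintype ι] [Fintype κ]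
  (μ : Measure X) [IsProbabilityMeasure μ]

theorem measureReal_leaveOneOut_map (R : X → Set X) (e : ι ↪ κ) (I J : Finset ι) :
    (Measure.pi fun _ => μ).real (leaveOneOut R (I.map e) (J.map e)) =
      (Measure.pi fun _ => μ).real (leaveOneOut R I J) := by
  rw [← map_pi_comp_injective μ e.injective, map_measureReal_apply .of_discrete .of_discrete]
  simp only [Set.preimage, comp_mem_leaveOneOut_iff, Set.ofPred_mem_eq]

theorem measureReal_leaveOneOut_insert_comm (R : X → Set X) {I J : Finset ι} {a b : ι}
    (haI : a ∈ I) (hbI : b ∈ I) (haJ : a ∉ J) (hbJ : b ∉ J) :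
    (Measure.pi fun _ => μ).real (leaveOneOut R I (insert a J)) =
      (Measure.pi fun _ => μ).real (leaveOneOut R I (insert b J)) := by
  have hI : I.map (Equiv.swap a b).toEmbedding = I := Finset.map_perm fun i hi => by
    obtain rfl | rfl := Equiv.eq_or_eq_of_swap_apply_ne_self hi <;> assumption
  have hJ : J.map (Equiv.swap a b).toEmbedding = J := by
    rw [Finset.map_eq_image]
    exact (Finset.image_congr fun i hi => Equiv.swap_apply_of_ne_of_ne
      (ne_of_mem_of_not_mem hi haJ) (ne_of_mem_of_not_mem hi hbJ)).trans Finset.image_id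
  rw [← measureReal_leaveOneOut_map μ R (Equiv.swap a b).toEmbedding, hI, Finset.map_insert, hJ]
  simp

/- Resampling the coordinate `a`, on which the event on the left does not depend, breaks the
acceptance of `x a` with probability at least `η`. -/
theorem mul_measureReal_leaveOneOut_inter_le (hR : Monotone R) {I J : Finset ι} {a : ι}
    (haI : a ∉ I) (haJ : a ∉ J) {η : ℝ} (hη : 0 ≤ η) :
    η * (Measure.pi fun _ => μ).real
        (leaveOneOut R I J ∩ {x | μ.real (R (I.sup x)) < 1 - η}) ≤
      (Measure.pi fun _ => μ).real (leaveOneOut R (insert a I) J) -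
        (Measure.pi fun _ => μ).real (leaveOneOut R (insert a I) (insert a J)) := by
  set E := leaveOneOut R I J ∩ {x | μ.real (R (I.sup x)) < 1 - η}
  set H : (ι → X) → Set X := fun x => (R (I.sup x))ᶜ
  have hsup : DependsOn (fun x : ι → X => I.sup x) {a}ᶜ :=
    (dependsOn_sup I).mono fun i hi => ne_of_mem_of_not_mem hi haI
  have hH : DependsOn H {a}ᶜ := fun x y h => congrArg (fun S => (R S)ᶜ) (hsup h)
  have hE : DependsOn (· ∈ E) {a}ᶜ := fun x y h => by
    have hmem := (dependsOn_mem_leaveOneOut R I J).mono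
      (Set.union_subset (fun i hi => ne_of_mem_of_not_mem hi haI)
        fun i hi => ne_of_mem_of_not_mem hi haJ) h
    exact congrArg₂ And hmem (congrArg (fun S => μ.real (R S) < 1 - η) (hsup h))
  have hc : ∀ x ∈ E, ENNReal.ofReal η ≤ μ (H x) := fun x hx => by
    rw [← ofReal_measureReal, probReal_compl_eq_one_sub .of_discrete]
    exact ENNReal.ofReal_le_ofReal (by linarith [show μ.real (R (I.sup x)) < 1 - η from hx.2])
  have hsub : E ∩ {x | x a ∈ H x} ⊆
      leaveOneOut R (insert a I) J \ leaveOneOut R (insert a I) (insert a J) := by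
    rintro x ⟨⟨hx, -⟩, hxa⟩
    refine ⟨leaveOneOut_subset_leaveOneOut hR (Finset.subset_insert a I) subset_rfl hx,
      fun hx' => hxa ?_⟩
    simpa [haI] using hx' a (Finset.mem_insert_self a J)
  rw [← measureReal_sdiff (leaveOneOut_subset_leaveOneOut hR subset_rfl
    (Finset.subset_insert a J)) .of_discrete, measureReal_def, ← ENNReal.toReal_ofReal hη,
    ← ENNReal.toReal_mul]
  exact ENNReal.toReal_mono (measure_ne_top _ _) <|
    (mul_pi_le_pi_inter_eval (fun _ => μ) hE hH .of_discrete .of_discrete hc).trans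
      (measure_mono hsub)

theorem measureReal_leaveOneOut_div_two_le (hR : Monotone R) {I J : Finset ι} {a b : ι}
    (haI : a ∉ I) (haJ : a ∉ J) (hbI : b ∈ I) (hbJ : b ∉ J) {η : ℝ} (hη : 0 < η) (hη1 : η ≤ 1)
    (h : (1 - η / 4) * (Measure.pi fun _ => μ).real (leaveOneOut R (insert a I) J) ≤
      (Measure.pi fun _ => μ).real (leaveOneOut R I (insert b J))) :
    (Measure.pi fun _ => μ).real (leaveOneOut R (insert a I) J) / 2 ≤
      (Measure.pi fun _ => μ).real {x | 1 - η ≤ μ.real (R (I.sup x))} := by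
  set P := Measure.pi fun _ : ι => μ
  set p := P.real (leaveOneOut R (insert a I) J)
  set E := leaveOneOut R I J
  set bad := {x : ι → X | μ.real (R (I.sup x)) < 1 - η}
  have hbad : P.real (E ∩ bad) ≤ p / 4 := by
    refine le_of_mul_le_mul_left ?_ hη
    calc η * P.real (E ∩ bad)
        ≤ p - P.real (leaveOneOut R (insert a I) (insert b J)) := by
          rw [← measureReal_leaveOneOut_insert_comm μ R (Finset.mem_insert_self a I)
            (Finset.mem_insert_of_mem hbI) haJ hbJ]
          exact mul_measureReal_leaveOneOut_inter_le μ hR haI haJ hη.le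
      _ ≤ p - P.real (leaveOneOut R I (insert b J)) := sub_le_sub_left (measureReal_mono <|
          leaveOneOut_subset_leaveOneOut hR (Finset.subset_insert a I) subset_rfl) p
      _ ≤ η * (p / 4) := by linarith
  have hE : (1 - η / 4) * p ≤ P.real E := h.trans <| measureReal_mono <|
    leaveOneOut_subset_leaveOneOut hR subset_rfl (Finset.subset_insert b J)
  have hgood : E \ bad ⊆ {x | 1 - η ≤ μ.real (R (I.sup x))} := fun x hx => by
    simpa [bad] using hx.2
  calc p / 2 ≤ P.real E - P.real (E ∩ bad) := by
        nlinarith [measureReal_nonneg (μ := P) (s := leaveOneOut R (insert a I) J)]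
    _ = P.real (E \ bad) := by
      rw [← measureReal_inter_add_sdiff (s := E) (t := bad) .of_discrete, add_sub_cancel_left]
    _ ≤ _ := measureReal_mono hgood

theorem measureReal_leaveOneOut_sub_div_two_le (hR : Monotone R) {η : ℝ} (hη : 0 < η)
    (hη1 : η ≤ 1) {K k : ℕ} (hK : 0 < K) (hk : 2 * K ≤ k) :
    ((Measure.pi fun _ : Fin K => μ).real (leaveOneOut R .univ .univ) - (1 - η / 4) ^ K) / 2 ≤
      (Measure.pi fun _ : Fin k => μ).real {x | 1 - η ≤ μ.real (R (Finset.univ.sup x))} := by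
  set P := Measure.pi fun _ : Fin k => μ
  let I (s : ℕ) : Finset (Fin k) := Finset.univ.filter (·.val < s)
  have hsucc {s : ℕ} (hs : s < k) : I (s + 1) = insert ⟨s, hs⟩ (I s) := by
    ext i
    simp [I, Fin.ext_iff, Nat.le_iff_lt_or_eq, or_comm]
  have hnot (s : ℕ) {i : Fin k} (hi : s ≤ i) : i ∉ I s := fun h =>
    (Finset.mem_filter.1 h).2.not_ge hi
  have hIK : Finset.univ.map (Fin.castLEEmb (by lia : K ≤ k)) = I K := by
    ext i
    simpa [I, Fin.ext_iff] using ⟨fun ⟨j, hj⟩ => hj ▸ j.isLt, fun hi => ⟨⟨i, hi⟩, rfl⟩⟩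
  let d (t : ℕ) : ℝ := P.real (leaveOneOut R (I (2 * K - t)) (I t))
  have hdK : d K = (Measure.pi fun _ : Fin K => μ).real (leaveOneOut R .univ .univ) := by
    rw [← measureReal_leaveOneOut_map μ R (Fin.castLEEmb (by lia : K ≤ k)), hIK]
    simp [d, two_mul, P]
  rw [← hdK]
  rcases le_or_gt (d K) ((1 - η / 4) ^ K) with hsmall | hlarge
  · exact le_trans (by linarith) measureReal_nonneg
  obtain ⟨t, htK, ht⟩ := exists_mul_le_succ (by linarith) hK measureReal_le_one hlarge.le
  obtain ⟨s, hs⟩ : ∃ s, 2 * K - t = s + 1 := ⟨2 * K - t - 1, by lia⟩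
  have hsK : s < k := by lia
  have htk : t < k := by lia
  have hI : Monotone I := fun _ _ h => Finset.monotone_filter_right _ fun _ _ hi => hi.trans_le h
  have hdt : d K ≤ d t := measureReal_mono <|
    leaveOneOut_subset_leaveOneOut hR (hI (by lia)) (hI htK.le)
  simp only [d, hs, hsucc hsK, hsucc htk, show 2 * K - (t + 1) = s by lia] at ht
  calc (d K - (1 - η / 4) ^ K) / 2
      ≤ d t / 2 := by linarith [pow_nonneg (by linarith : 0 ≤ 1 - η / 4) K]
    _ = P.real (leaveOneOut R (insert ⟨s, hsK⟩ (I s)) (I t)) / 2 := by simp only [d, hs, hsucc hsK]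
    _ ≤ P.real {x | 1 - η ≤ μ.real (R ((I s).sup x))} :=
      measureReal_leaveOneOut_div_two_le μ hR (hnot s le_rfl) (hnot t (by lia))
        (Finset.mem_filter.2 ⟨Finset.mem_univ _, by lia⟩) (hnot t le_rfl) hη hη1 ht
    _ ≤ _ := measureReal_mono fun x hx => le_trans (α := ℝ) hx <| measureReal_mono <|
      hR <| Finset.sup_mono (Finset.subset_univ _)

end LeaveOneOut

section Reach

/-- The inputs that can be turned into an element of `A` by changing coordinates in the support
of `S`. -/
def reach {ι : Type*} (A : Set (ι → Bool)) (S : ι → Bool) : Set (ι → Bool) :=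
  {x | ∃ y ∈ A, ∀ i, S i = false → y i = x i}

theorem reach_mono {ι : Type*} (A : Set (ι → Bool)) : Monotone (reach A) :=
  fun _ _ hS _ ⟨y, hyA, hyx⟩ => ⟨y, hyA, fun i hi =>
    hyx i (Bool.eq_false_of_le_false ((hS i).trans_eq hi))⟩

theorem mem_leaveOneOut_reach {ι κ : Type*} [DecidableEq ι] [Fintype ι] {A : Set (κ → Bool)}
    {x : ι → κ → Bool} (hx : Finset.univ.sup x ∈ A) : x ∈ leaveOneOut (reach A) .univ .univ := by
  refine fun i _ => ⟨_, hx, fun j hj => ?_⟩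
  rw [← Finset.insert_erase (Finset.mem_univ i), Finset.sup_insert]
  simp [hj]

theorem measureReal_boost {n : ℕ} (μ : Measure (Fin n → Bool)) (k : ℕ) (s : Set (Fin n → Bool)) :
    (boost μ k).real s = (Measure.pi fun _ : Fin k => μ).real {x | Finset.univ.sup x ∈ s} := by
  rw [boost, map_measureReal_apply (measurable_of_finite _) .of_discrete]
  simp only [Set.preimage, ← Finset.sup_apply]

theorem measureReal_sup_sub_div_two_le_boost {n : ℕ} (μ : Measure (Fin n → Bool))
    [IsProbabilityMeasure μ] (A : Set (Fin n → Bool)) {η : ℝ} (hη : 0 < η) (hη1 : η ≤ 1)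
    {K k : ℕ} (hK : 0 < K) (hk : 2 * K ≤ k) :
    ((Measure.pi fun _ : Fin K => μ).real {x | Finset.univ.sup x ∈ A} - (1 - η / 4) ^ K) / 2 ≤
      (boost μ k).real {S | 1 - η ≤ μ.real (reach A S)} := by
  rw [measureReal_boost]
  refine le_trans ?_ (measureReal_leaveOneOut_sub_div_two_le μ (reach_mono A) hη hη1 hK hk)
  exact div_le_div_of_nonneg_right
    (sub_le_sub_right (measureReal_mono fun _ hx => mem_leaveOneOut_reach hx) _) zero_le_two

end Reach

section Coalitions

variable {n m : ℕ} {B B' : Finset (Fin n)}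

instance (B : Finset (Fin n)) : Finite (Strategy n m B) :=
  inferInstanceAs (Finite ((i : Fin m) → (Fin (i.val + 1) → _ → Bool) → Fin n → Bool))

instance (B : Finset (Fin n)) : Nonempty (Strategy n m B) :=
  ⟨fun _ _ _ => false⟩

/-- The strategy of a larger coalition `B'` that lets its own players outside `B` broadcast the
predetermined bits `c` and otherwise follows `π`. -/
def Strategy.enlarge (B' : Finset (Fin n)) (c : Fin m → Fin n → Bool) (π : Strategy n m B) :
    Strategy n m B' := fun i h j =>
  if j ∈ B then
    π i (fun k l => if hl : l.1 ∈ B' then c ⟨k.1, k.2.trans_le i.2⟩ l.1 else h k ⟨l.1, hl⟩) j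
  else c i j

/-- The strategy for `m + 1` rounds that broadcasts according to `Y x` in the first round and
follows `ρ x` in the others, where `x` collects the first-round bits of the other players. -/
def Strategy.cons (Y : ({j // j ∉ B} → Bool) → Fin n → Bool)
    (ρ : ({j // j ∉ B} → Bool) → Strategy n m B) : Strategy n (m + 1) B :=
  Fin.cases (fun h => Y (h 0)) fun i h => ρ (h 0) i (Fin.tail h)

theorem execP_enlarge (hB : B ⊆ B') (c α : Fin m → Fin n → Bool) (π : Strategy n m B) :
    execP B' (π.enlarge B' c) α = execP B π fun i => B'.piecewise (c i) (α i) := by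
  funext i j
  by_cases hj : j ∈ B
  · simp only [execP, Strategy.enlarge, hj, hB hj, if_true]
    rfl
  · simp [execP, Strategy.enlarge, hj, Finset.piecewise]

theorem execP_cons {Y : ({j // j ∉ B} → Bool) → Fin n → Bool} (hY : ∀ h j, Y h j.1 = h j)
    (ρ : ({j // j ∉ B} → Bool) → Strategy n m B) (x : Fin n → Bool) (β : Fin m → Fin n → Bool) :
    execP B (Strategy.cons Y ρ) (Fin.cons x β) =
      Fin.cons (Y fun j => x j.1) (execP B (ρ fun j => x j.1) β) := by
  funext i j
  by_cases hj : j ∈ B <;> refine Fin.cases ?_ (fun i => ?_) i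
  · simp only [execP, hj, if_true]
    rfl
  · simp only [execP, hj, if_true, Fin.cons_succ]
    rfl
  · simpa [execP, hj] using (hY (fun j => x j.1) ⟨j, hj⟩).symm
  · simp [execP, hj]

section

variable (μs : Fin m → Fin n → Measure Bool) (f : (Fin m → Fin n → Bool) → Bool) (b : Bool)

theorem exists_IB_eq (B : Finset (Fin n)) : ∃ π, IB μs f B b = (IPi μs f B π b).toReal :=
  (exists_eq_ciSup_of_finite (f := fun π => IPi μs f B π b)).imp fun _ hπ => by rw [IB, ← hπ]

variable [∀ i j, IsProbabilityMeasure (μs i j)]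

theorem toReal_IPi_le_IB (π : Strategy n m B) : (IPi μs f B π b).toReal ≤ IB μs f B b :=
  ENNReal.toReal_mono (ne_top_of_le_ne_top ENNReal.one_ne_top (iSup_le fun _ => prob_le_one))
    (le_iSup (fun π => IPi μs f B π b) π)

theorem measurePreserving_piecewise (B : Finset (Fin n)) :
    MeasurePreserving
      (fun (p : (Fin m → Fin n → Bool) × (Fin m → Fin n → Bool)) i => B.piecewise (p.1 i) (p.2 i))
      ((Measure.pi fun i => Measure.pi (μs i)).prod (Measure.pi fun i => Measure.pi (μs i)))
      (Measure.pi fun i => Measure.pi (μs i)) := by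
  refine measurePreserving_pi_prodMk (f := fun _ p => B.piecewise p.1 p.2) fun i => ?_
  refine measurePreserving_pi_prodMk (f := fun j p => if j ∈ B then p.1 else p.2) fun j => ?_
  split_ifs
  · exact measurePreserving_fst
  · exact measurePreserving_snd

theorem exists_measure_le_measure_piecewise (B : Finset (Fin n)) (E : Set (Fin m → Fin n → Bool)) :
    ∃ c : Fin m → Fin n → Bool, (Measure.pi fun i => Measure.pi (μs i)) E ≤
      (Measure.pi fun i => Measure.pi (μs i)) {α | (fun i => B.piecewise (c i) (α i)) ∈ E} := by
  set P := Measure.pi fun i => Measure.pi (μs i)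
  have hE : P E = ∫⁻ c, P {α | (fun i => B.piecewise (c i) (α i)) ∈ E} ∂P := by
    rw [← (measurePreserving_piecewise μs B).measure_preimage
      (MeasurableSet.of_discrete (s := E)).nullMeasurableSet, Measure.prod_apply .of_discrete]
    rfl
  rw [hE]
  exact exists_lintegral_le (hE ▸ measure_ne_top P E)

theorem IB_mono (hB : B ⊆ B') : IB μs f B b ≤ IB μs f B' b := by
  obtain ⟨π, hπ⟩ := exists_IB_eq μs f b B
  obtain ⟨c, hc⟩ := exists_measure_le_measure_piecewise μs B' {α | f (execP B π α) = b}
  calc IB μs f B b = (IPi μs f B π b).toReal := hπ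
    _ ≤ (IPi μs f B' (π.enlarge B' c) b).toReal := ENNReal.toReal_mono (measure_ne_top _ _) <| by
      simpa only [IPi, execP_enlarge hB, Set.mem_ofPred_eq] using hc
    _ ≤ IB μs f B' b := toReal_IPi_le_IB μs f b _

end

variable (μs : Fin (m + 1) → Fin n → Measure Bool) [∀ i j, IsProbabilityMeasure (μs i j)]
  (g : (Fin (m + 1) → Fin n → Bool) → Bool) (b : Bool)

theorem integral_IB_cons_le_IB {Y : ({j // j ∉ B} → Bool) → Fin n → Bool}
    (hY : ∀ h j, Y h j.1 = h j) :
    ∫ x, IB (fun i => μs i.succ) (fun β => g (Fin.cons (Y fun j => x j.1) β)) B b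
      ∂(Measure.pi (μs 0)) ≤ IB μs g B b := by
  choose ρ hρ using fun h => exists_IB_eq (fun i => μs i.succ) (fun β => g (Fin.cons (Y h) β)) b B
  refine le_of_eq_of_le ?_ (toReal_IPi_le_IB μs g b (Strategy.cons Y ρ))
  rw [IPi, ← measureReal_def, measureReal_pi_fin_succ _ .of_discrete]
  simp only [hρ, Set.mem_ofPred_eq, execP_cons hY]
  rfl

theorem measureReal_reach_mul_le_IB (T : Finset (Fin n)) (S : Fin n → Bool) (c : ℝ) :
    (Measure.pi (μs 0)).real
        (reach {y | c ≤ IB (fun i => μs i.succ) (fun β => g (Fin.cons y β)) T b} S) * c ≤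
      IB μs g (supp S ∪ T) b := by
  set A := {y | c ≤ IB (fun i => μs i.succ) (fun β => g (Fin.cons y β)) T b}
  set U := supp S ∪ T
  have hexists (h : {j // j ∉ U} → Bool) : ∃ y : Fin n → Bool, (∀ j, y j.1 = h j) ∧
      ((∃ y' ∈ A, ∀ j, y' j.1 = h j) → y ∈ A) := by
    by_cases hA : ∃ y' ∈ A, ∀ j, y' j.1 = h j
    · obtain ⟨y', hy'A, hy'⟩ := hA
      exact ⟨y', hy', fun _ => hy'A⟩
    · exact ⟨fun j => if hj : j ∈ U then false else h ⟨j, hj⟩, fun j => by simp [j.2],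
        fun h => absurd h hA⟩
  choose Y hY hYA using hexists
  have hreach : ∀ x ∈ reach A S, Y (fun j => x j.1) ∈ A := by
    rintro x ⟨y, hyA, hyx⟩
    refine hYA _ ⟨y, hyA, fun j => hyx j.1 ?_⟩
    simpa [supp] using fun h => j.2 (Finset.mem_union_left T h)
  calc _ = ∫ x, (reach A S).indicator (fun _ => c) x ∂(Measure.pi (μs 0)) := by
        rw [integral_indicator_const _ .of_discrete, smul_eq_mul]
    _ ≤ ∫ x, IB (fun i => μs i.succ) (fun β => g (Fin.cons (Y fun j => x j.1) β)) U b
        ∂(Measure.pi (μs 0)) := by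
      refine integral_mono .of_finite .of_finite <| Set.indicator_le' (fun x hx => ?_)
        fun _ _ => ENNReal.toReal_nonneg
      exact (hreach x hx).trans (IB_mono _ _ b Finset.subset_union_right)
    _ ≤ _ := integral_IB_cons_le_IB μs g b hY

end Coalitions

theorem exists_div_card_le_sum_mul_measureReal {Ω τ β : Type*} [MeasurableSpace Ω] [Fintype τ]
    [Fintype β] (P : Measure Ω) [IsProbabilityMeasure P] {w : τ → ℝ} (hw : ∀ t, 0 ≤ w t)
    {E : β → τ → Set Ω} (hE : ∀ b t, MeasurableSet (E b t)) {δ : ℝ}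
    (h : ∀ ω, ∃ b, δ ≤ ∑ t, (E b t).indicator (fun _ => w t) ω) :
    ∃ b, δ / Fintype.card β ≤ ∑ t, w t * P.real (E b t) := by
  have hint (b : β) (t : τ) : Integrable ((E b t).indicator fun _ => w t) P :=
    (integrable_const _).indicator (hE b t)
  have hsum (b : β) : Integrable (fun ω => ∑ t, (E b t).indicator (fun _ => w t) ω) P :=
    integrable_finsetSum _ fun t _ => hint b t
  have : Nonempty Ω := nonempty_of_isProbabilityMeasure P
  have : Nonempty β := ⟨(h (Classical.arbitrary Ω)).choose⟩
  refine (Finset.exists_le_of_sum_le Finset.univ_nonempty (f := fun _ => δ / Fintype.card β) ?_).imp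
    fun _ => And.right
  calc ∑ _ : β, δ / Fintype.card β = ∫ _, δ ∂P := by
        simp [mul_div_cancel₀]
    _ ≤ ∫ ω, ∑ b, ∑ t, (E b t).indicator (fun _ => w t) ω ∂P := by
      refine integral_mono (integrable_const _) (integrable_finsetSum _ fun b _ => hsum b)
        fun ω => ?_
      obtain ⟨b, hb⟩ := h ω
      exact hb.trans <| Finset.single_le_sum
        (f := fun b => ∑ t, (E b t).indicator (fun _ => w t) ω) (fun b _ => Finset.sum_nonneg
          fun t _ => Set.indicator_nonneg (fun _ _ => hw t) ω) (Finset.mem_univ b)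
    _ = ∑ b, ∑ t, w t * P.real (E b t) := by
      rw [integral_finsetSum _ fun b _ => hsum b]
      refine Finset.sum_congr rfl fun b _ => ?_
      rw [integral_finsetSum _ fun t _ => hint b t]
      simp [integral_indicator_const _ (hE b _), mul_comm]

theorem toReal_toOuterMeasure_eq_sum {α : Type*} [Fintype α] (D : PMF α) (s : Set α) :
    (D.toOuterMeasure s).toReal = ∑ a, s.indicator (fun a => (D a).toReal) a := by
  rw [PMF.toOuterMeasure_apply_fintype, ENNReal.toReal_sum fun a _ =>
    ne_top_of_le_ne_top (D.apply_ne_top a) (Set.indicator_le_self _ _ _)]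
  refine Finset.sum_congr rfl fun a _ => ?_
  by_cases ha : a ∈ s <;> simp [ha]

theorem exists_nat_one_sub_pow_le {η δ : ℝ} (hη : 0 < η) (hη1 : η ≤ 1) (hδ : 0 < δ)
    (hδ1 : δ ≤ 1) :
    ∃ K : ℕ, 0 < K ∧ (1 - η / 4) ^ K ≤ δ / 4 ∧
      ∀ k : ℕ, 10 * Real.log (4 / δ) / η ≤ k → 2 * K ≤ k := by
  have hlog : 1 ≤ Real.log (4 / δ) := by
    rw [Real.le_log_iff_exp_le (by positivity), le_div_iff₀ hδ]
    nlinarith [Real.exp_one_lt_d9]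
  set x := Real.log (4 / δ) / η with hx
  have hx1 : 1 ≤ x := (one_le_div hη).2 (hη1.trans hlog)
  have hK : 4 * x ≤ ⌈4 * x⌉₊ := Nat.le_ceil _
  refine ⟨⌈4 * x⌉₊, Nat.ceil_pos.2 (by linarith), ?_, fun k hk => ?_⟩
  · calc (1 - η / 4) ^ ⌈4 * x⌉₊ ≤ Real.exp (-(η / 4)) ^ ⌈4 * x⌉₊ :=
          pow_le_pow_left₀ (by linarith) (Real.one_sub_le_exp_neg _) _
      _ = Real.exp (-(η / 4 * ⌈4 * x⌉₊)) := by rw [← Real.exp_nat_mul]; ring_nf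
      _ ≤ Real.exp (-Real.log (4 / δ)) := by
        gcongr
        calc Real.log (4 / δ) = η / 4 * (4 * x) := by rw [hx]; field_simp
          _ ≤ η / 4 * ⌈4 * x⌉₊ := by gcongr
      _ = δ / 4 := by rw [Real.exp_neg, Real.exp_log (by positivity), inv_div]
  · have hKlt : (⌈4 * x⌉₊ : ℝ) < 4 * x + 1 := Nat.ceil_lt_add_one (by linarith)
    rw [mul_div_assoc] at hk
    have : (2 * ⌈4 * x⌉₊ : ℝ) ≤ k := by linarith
    exact_mod_cast this

theorem one_le_logb_two {x : ℝ} (hx : 2 ≤ x) : 1 ≤ Real.logb 2 x := by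
  simpa using Real.logb_le_logb_of_le one_lt_two two_pos hx

theorem ten_mul_log_div_le {ε δ r : ℝ} (hε : 0 < ε) (hε1 : ε ≤ 1) (hδ : 0 < δ) (hδ1 : δ ≤ 1)
    (hr : 1 ≤ r) (s : ℕ) :
    10 * Real.log (4 / δ) / (ε / 2 ^ (s + 1)) ≤
      40 * ε⁻¹ ^ 3 * 4 ^ s * Real.logb 2 (2 * r) * Real.logb 2 (2 / δ) *
        Real.logb 2 (Real.logb 2 (4 / δ)) := by
  have hδ2 : 1 ≤ Real.logb 2 (2 / δ) := one_le_logb_two (le_div_self zero_le_two hδ hδ1)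
  have hδ4 : Real.logb 2 (4 / δ) = 1 + Real.logb 2 (2 / δ) := by
    rw [show 4 / δ = 2 * (2 / δ) by ring, Real.logb_mul two_ne_zero (by positivity),
      Real.logb_self_eq_one one_lt_two]
  have hδ0 : 0 ≤ Real.log (4 / δ) :=
    Real.log_nonneg ((one_le_div hδ).2 (by linarith))
  have hr2 : 1 ≤ Real.logb 2 (2 * r) := one_le_logb_two (by linarith)
  have hloglog : 1 ≤ Real.logb 2 (Real.logb 2 (4 / δ)) := one_le_logb_two (by linarith)
  have hlog : Real.log (4 / δ) ≤ 2 * Real.logb 2 (2 / δ) :=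
    calc Real.log (4 / δ) = Real.logb 2 (4 / δ) * Real.log 2 :=
          (div_mul_cancel₀ _ (Real.log_pos one_lt_two).ne').symm
      _ ≤ Real.logb 2 (4 / δ) * 1 := by
        gcongr
        · linarith
        · linarith [Real.log_two_lt_d9]
      _ ≤ 2 * Real.logb 2 (2 / δ) := by linarith
  have hε3 : ε⁻¹ ≤ ε⁻¹ ^ 3 := le_self_pow₀ ((one_le_inv₀ hε).2 hε1) three_ne_zero
  calc 10 * Real.log (4 / δ) / (ε / 2 ^ (s + 1))
      = 20 * ε⁻¹ * 2 ^ s * Real.log (4 / δ) := by rw [pow_succ]; field_simp; ring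
    _ ≤ 20 * ε⁻¹ ^ 3 * 4 ^ s * (2 * Real.logb 2 (2 / δ)) := by
      gcongr
      norm_num
    _ = 40 * ε⁻¹ ^ 3 * 4 ^ s * 1 * Real.logb 2 (2 / δ) * 1 := by ring
    _ ≤ _ := by gcongr

theorem div_logb_add_le_div_eight {ε δ r : ℝ} (hε : 0 < ε) (hε2 : ε ≤ 1 / 2) (hδ : 0 ≤ δ)
    (hr : 1 ≤ r) :
    δ / (4 * Real.logb 2 (1 / ε) + 4 * r) ≤ δ / 8 := by
  have hlog : 1 ≤ Real.logb 2 (1 / ε) := one_le_logb_two <| by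
    rw [le_div_iff₀ hε]
    linarith
  gcongr
  linarith

theorem measureReal_sup_sub_div_two_le_boost_IB {n m : ℕ} (μs : Fin (m + 1) → Fin n → Measure Bool)
    [∀ i j, IsProbabilityMeasure (μs i j)] (g : (Fin (m + 1) → Fin n → Bool) → Bool)
    (T : Finset (Fin n)) (b : Bool) {η : ℝ} (hη : 0 < η) (hη1 : η ≤ 1) {K k : ℕ} (hK : 0 < K)
    (hk : 2 * K ≤ k) :
    ((Measure.pi fun _ : Fin K => Measure.pi (μs 0)).real {x | 1 - η ≤
          IB (fun i => μs i.succ) (fun β => g (Fin.cons (Finset.univ.sup x) β)) T b} -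
        (1 - η / 4) ^ K) / 2 ≤
      (boost (Measure.pi (μs 0)) k).real {x | 1 - 2 * η ≤ IB μs g (supp x ∪ T) b} := by
  set A := {y | 1 - η ≤ IB (fun i => μs i.succ) (fun β => g (Fin.cons y β)) T b}
  refine (measureReal_sup_sub_div_two_le_boost _ A hη hη1 hK hk).trans ?_
  rw [measureReal_boost, measureReal_boost]
  refine measureReal_mono fun xs hxs => ?_
  calc 1 - 2 * η ≤ (1 - η) * (1 - η) := by nlinarith
    _ ≤ (Measure.pi (μs 0)).real (reach A (Finset.univ.sup xs)) * (1 - η) :=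
      mul_le_mul_of_nonneg_right hxs (by linarith)
    _ ≤ _ := measureReal_reach_mul_le_IB μs g b T _ (1 - η)

theorem multi_round_large_bias_step_general {n m : ℕ} {η δ : ℝ} (hη : 0 < η) (hη1 : η ≤ 1)
    (hδ : 0 < δ) (hδ1 : δ ≤ 1) (μs : Fin (m + 1) → Fin n → Measure Bool)
    [∀ i j, IsProbabilityMeasure (μs i j)] (g : (Fin (m + 1) → Fin n → Bool) → Bool)
    (D : PMF (Finset (Fin n)))
    (hD : ∀ g' : (Fin m → Fin n → Bool) → Bool, ∃ b',
      δ ≤ (D.toOuterMeasure {T | 1 - η ≤ IB (fun i => μs i.succ) g' T b'}).toReal) :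
    ∃ b, ∀ k : ℕ, 10 * Real.log (4 / δ) / η ≤ k →
      δ / 8 ≤ ∑ T, (D T).toReal *
        (boost (Measure.pi (μs 0)) k).real {x | 1 - 2 * η ≤ IB μs g (supp x ∪ T) b} := by
  obtain ⟨K, hK, hpow, hk⟩ := exists_nat_one_sub_pow_le hη hη1 hδ hδ1
  set P := Measure.pi fun _ : Fin K => Measure.pi (μs 0)
  let E (b : Bool) (T : Finset (Fin n)) : Set (Fin K → Fin n → Bool) := {x | 1 - η ≤
    IB (fun i => μs i.succ) (fun β => g (Fin.cons (Finset.univ.sup x) β)) T b}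
  obtain ⟨b, hb⟩ := exists_div_card_le_sum_mul_measureReal P (w := fun T => (D T).toReal)
    (fun _ => ENNReal.toReal_nonneg) (E := E) (fun _ _ => .of_discrete)
    fun x => (hD fun β => g (Fin.cons (Finset.univ.sup x) β)).imp
      fun _ h => h.trans_eq (toReal_toOuterMeasure_eq_sum D _)
  refine ⟨b, fun k hkδ => ?_⟩
  have hsum : ∑ T, (D T).toReal = 1 := by
    rw [← ENNReal.toReal_sum fun T _ => D.apply_ne_top T, ← tsum_fintype (L := .unconditional _),
      D.tsum_coe, ENNReal.toReal_one]
  calc δ / 8 = (δ / Fintype.card Bool - δ / 4) / 2 := by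
        simp only [Fintype.card_bool, Nat.cast_ofNat]
        ring
    _ ≤ (∑ T, (D T).toReal * P.real (E b T) - (1 - η / 4) ^ K) / 2 := by gcongr
    _ = ∑ T, (D T).toReal * ((P.real (E b T) - (1 - η / 4) ^ K) / 2) := by
      simp_rw [mul_div_assoc', mul_sub]
      rw [← Finset.sum_div, Finset.sum_sub_distrib, ← Finset.sum_mul, hsum, one_mul]
    _ ≤ _ := Finset.sum_le_sum fun T _ => mul_le_mul_of_nonneg_left
      (measureReal_sup_sub_div_two_le_boost_IB μs g T b hη hη1 hK (hk k hkδ))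
      ENNReal.toReal_nonneg

/-- Large bias, multi-round step: if every `(ℓ−1)`-round protocol over
`μ₂ × ⋯ × μ_ℓ` can be biased by `T ∼ D` with probability `≥ δ`, then some `b` works for `g`:
for all large enough `k`, taking `S ∼ μ₁^{(k)}` and `T ∼ D` independently, with probability
at least `δ/(4 log(1/ε) + 4r)` the coalition `S ∪ T` biases `g` towards `b`. -/
theorem multi_round_large_bias_step :
    ∃ C : ℝ, C > 0 ∧
      ∀ (n : ℕ) (ε δ : ℝ), 0 < ε → ε ≤ 1/2 → 0 < δ → δ ≤ 1/2 →
      ∀ (r ℓ : ℕ) (hℓ : 1 ≤ ℓ) (_ : ℓ ≤ r),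
      ∀ μs : Fin ℓ → Fin n → Measure Bool, (∀ i j, IsProbabilityMeasure (μs i j)) →
      ∀ g : (Fin ℓ → Fin n → Bool) → Bool,
      ∀ D : PMF (Finset (Fin n)),
      (∀ g' : (Fin (ℓ - 1) → Fin n → Bool) → Bool, ∃ b' : Bool,
        (D.toOuterMeasure {T |
            IB (fun i j => μs ⟨i.val + 1, by have := i.isLt; omega⟩ j) g' T b'
              ≥ 1 - ε / 2 ^ (r - ℓ + 1)}).toReal ≥ δ) →
      ∃ b : Bool, ∀ k : ℕ,
        (k : ℝ) ≥ C * ε⁻¹ ^ 3 * 4 ^ (r - ℓ) * Real.logb 2 (2 * r) *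
            Real.logb 2 (2 / δ) * Real.logb 2 (Real.logb 2 (4 / δ)) →
        (∑ T : Finset (Fin n), (D T).toReal *
            ((boost (Measure.pi fun j => μs ⟨0, by omega⟩ j) k)
              {x | IB μs g (supp x ∪ T) b ≥ 1 - ε / 2 ^ (r - ℓ)}).toReal)
          ≥ δ / (4 * Real.logb 2 (1 / ε) + 4 * r) := by
  refine ⟨40, by norm_num, fun n ε δ hε hε2 hδ hδ2 r ℓ hℓ hℓr μs hμs g D hD => ?_⟩
  obtain ⟨m, rfl⟩ := Nat.exists_eq_add_of_le' hℓ
  have hr : (1 : ℝ) ≤ r := by exact_mod_cast hℓ.trans hℓr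
  have hη1 : ε / 2 ^ (r - (m + 1) + 1) ≤ 1 :=
    (div_le_self hε.le (one_le_pow₀ one_le_two)).trans (by linarith)
  obtain ⟨b, hb⟩ := multi_round_large_bias_step_general (by positivity) hη1 hδ (by linarith) μs g D
    hD
  have hη : 2 * (ε / 2 ^ (r - (m + 1) + 1)) = ε / 2 ^ (r - (m + 1)) := by
    rw [pow_succ]; field_simp
  rw [hη] at hb
  exact ⟨b, fun k hk => (div_logb_add_le_div_eight hε hε2 hδ.le hr).trans <| hb k <|
    (ten_mul_log_div_le hε (by linarith) hδ (by linarith) hr _).trans hk⟩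
end

section
/- There is a universal constant C > 0 such that the following holds. Let ε ∈ (0,1/2], let n ≥ 16, let μ be a product probability measure on {0,1}^n with Pr_{x∼μ}[x_i = 1] ≤ 1/2 for every i, let f : {0,1}^n → {0,1}, and let A := { i ∈ [n] : Pr_{x∼μ}[x_i = 1] > 1/log n }. For y ∈ {0,1}^A let f_y : {0,1}^{[n]∖A} → {0,1} be defined by f_y(z) := f(y,z), where {0,1}^{[n]∖A} carries the restriction of μ to the coordinates [n]∖A. Then there exist a value b_0 ∈ {0,1} and a set S ⊆ [n]∖A with |S| ≤ C·log(1/ε)·n/(ε·log n) such that Pr_{y∼μ|_A}[ I_S^{b_0}(f_y) ≥ 1 − ε/2 ] ≥ 1/4. -/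
open MeasureTheory

/-- Influence of coalition `S` towards value `b`, over an arbitrary finite index set. -/
noncomputable def infl {ι : Type*} {α : Type*} (μ : Measure (ι → Bool))
    (f : (ι → Bool) → α) (S : Finset ι) (b : α) : ℝ :=
  (μ {x | ∃ y, (∀ j ∉ S, y j = x j) ∧ f y = b}).toReal

/-!
Write `k + 1` for a sample size of order `1 / ε`. For a fixed `y`, apply `f_y` to the coordinatewise
OR of `k + 1` independent samples of `μ` outside `A`: one of the two values has probability at least
`1 / 2`, and some value `b` does so for at least half of the `y`. Call a point `x` bad if `k` fresh
samples joined with `x` produce `b` with probability less than `1 / 20`. Bad points have total mass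
at most `ε / 32`, since otherwise a sample of size `k + 1` would contain a bad point with high
probability, yet by symmetry it would rarely produce `b` while containing one. A good `x` is missed
by all of `m ≈ log (1 / ε)` independent blocks of `k` samples with probability at most
`(19 / 20) ^ m ≤ ε / 32`. A coalition that owns every coordinate equal to `1` in one of the `m * k`
samples can join `x` with whichever block it likes, and its expected size is at most `m * k` times
the sum of the biases. Averaging over the blocks fixes one coalition that is small and works for
enough `y`.
-/

section FubiniForSets

variable {α β : Type*} [MeasurableSpace α] [MeasurableSpace β] {μ : Measure α} {ν : Measure β}
  {D : Set (α × β)}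

lemma measureReal_prod_eq_integral [IsFiniteMeasure ν] (hD : MeasurableSet D) :
    (μ.prod ν).real D = ∫ a, ν.real {b | (a, b) ∈ D} ∂μ := by
  rw [Measure.real, Measure.prod_apply hD]
  exact (integral_toReal (measurable_measure_prodMk_left hD).aemeasurable
    (.of_forall fun _ ↦ measure_lt_top ν _)).symm

lemma measureReal_prod_eq_integral_symm [SFinite ν] [IsFiniteMeasure μ] (hD : MeasurableSet D) :
    (μ.prod ν).real D = ∫ b, μ.real {a | (a, b) ∈ D} ∂ν := by
  rw [Measure.real, Measure.prod_apply_symm hD]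
  exact (integral_toReal (measurable_measure_prodMk_right hD).aemeasurable
    (.of_forall fun _ ↦ measure_lt_top μ _)).symm

lemma integral_measureReal_le_of_forall_measureReal_le [IsProbabilityMeasure ν]
    [IsFiniteMeasure μ] (hD : MeasurableSet D) {c : ℝ} (hc : ∀ b, μ.real {a | (a, b) ∈ D} ≤ c) :
    ∫ a, ν.real {b | (a, b) ∈ D} ∂μ ≤ c := calc
  _ = ∫ b, μ.real {a | (a, b) ∈ D} ∂ν := by
    rw [← measureReal_prod_eq_integral hD, measureReal_prod_eq_integral_symm hD]
  _ ≤ ∫ _, c ∂ν := integral_mono_of_nonneg (.of_forall fun _ ↦ measureReal_nonneg)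
    (integrable_const c) (.of_forall hc)
  _ = c := by simp

end FubiniForSets

lemma one_le_prod_one_sub_add_sum {n : ℕ} {a : Fin n → ℝ} (h0 : ∀ i, 0 ≤ a i)
    (h1 : ∀ i, a i ≤ 1) : 1 ≤ ∏ i, (1 - a i) + ∑ i, a i := by
  rw [Finset.prod_one_sub_ordered, sub_add_eq_add_sub, le_sub_iff_add_le, add_le_add_iff_left]
  exact Finset.sum_le_sum fun i _ ↦ mul_le_of_le_one_right (h0 i) <|
    Finset.prod_le_one (fun j _ ↦ sub_nonneg.2 (h1 j)) fun j _ ↦ sub_le_self 1 (h0 j)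

section Samples

variable {Ω : Type*} [MeasurableSpace Ω] {k m : ℕ}

/-- An event on samples indexed by `ι` is permutation invariant if membership does not depend on
the order of the samples. -/
def IsPermInvariant {ι : Type*} (E : Set (ι → Ω)) : Prop :=
  ∀ (σ : Equiv.Perm ι) (x : ι → Ω), x ∘ σ ∈ E ↔ x ∈ E

lemma measurable_cons :
    Measurable fun p : Ω × (Fin k → Ω) ↦ (Fin.cons p.1 p.2 : Fin (k + 1) → Ω) := by
  refine measurable_pi_iff.2 fun i ↦ ?_
  cases i using Fin.cases with
  | zero => exact measurable_fst
  | succ i => exact (measurable_pi_apply i).comp measurable_snd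

/-- The probability that `k` independent samples of `ν` complete the point `x` to an element of the
event `E` on `k + 1` samples. For permutation-invariant `E` the position of `x`, here `0`, is
immaterial. -/
noncomputable def completionProb (ν : Measure Ω) (E : Set (Fin (k + 1) → Ω)) (x : Ω) : ℝ :=
  (Measure.pi fun _ : Fin k ↦ ν).real {s | Fin.cons x s ∈ E}

/-- The `ν`-mass of the points that none of the `m` blocks `S j` of `k` samples completes to an
element of the event `E` on `k + 1` samples. -/
noncomputable def missProb (ν : Measure Ω) (E : Set (Fin (k + 1) → Ω))
    (S : Fin m → Fin k → Ω) : ℝ :=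
  ν.real {x | ∀ j, Fin.cons x (S j) ∉ E}

variable {ν : Measure Ω} [IsProbabilityMeasure ν] {E : Set (Fin (k + 1) → Ω)}

lemma measurable_completionProb (hE : MeasurableSet E) : Measurable (completionProb ν E) :=
  (measurable_measure_prodMk_left (measurable_cons hE)).ennreal_toReal

lemma setIntegral_comp_eval_eq (hE : MeasurableSet E) (hsymm : IsPermInvariant E) {β : Ω → ℝ}
    (hβ : Integrable β ν) (i : Fin (k + 1)) :
    ∫ x in E, β (x i) ∂(Measure.pi fun _ ↦ ν) = ∫ a, β a * completionProb ν E a ∂ν := by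
  set D := {p : Ω × (Fin k → Ω) | (Fin.cons p.1 p.2 : Fin (k + 1) → Ω) ∈ E}
  have hD : MeasurableSet D := measurable_cons hE
  have hinsert (p : Ω × (Fin k → Ω)) : (i.insertNth p.1 p.2 : Fin (k + 1) → Ω) ∈ E ↔ p ∈ D := by
    rw [← Fin.cons_comp_cycleRange, hsymm, Set.mem_ofPred]
  have hmp := (measurePreserving_piFinSuccAbove (fun _ : Fin (k + 1) ↦ ν) i).symm
  calc ∫ x in E, β (x i) ∂(Measure.pi fun _ ↦ ν)
      = ∫ p, D.indicator (fun p ↦ β p.1) p ∂(ν.prod (Measure.pi fun _ ↦ ν)) := by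
        rw [← integral_indicator hE,
          ← hmp.integral_comp (MeasurableEquiv.measurableEmbedding _)]
        congr 1 with p
        change E.indicator (fun x ↦ β (x i)) (i.insertNth p.1 p.2) = _
        classical simp only [Set.indicator_apply, hinsert, Fin.insertNth_apply_same]
    _ = ∫ a, ∫ s, D.indicator (fun p ↦ β p.1) (a, s) ∂(Measure.pi fun _ ↦ ν) ∂ν :=
        integral_prod _ ((hβ.comp_fst _).indicator hD)
    _ = ∫ a, β a * completionProb ν E a ∂ν := by
        congr 1 with a
        rw [completionProb, mul_comm, ← smul_eq_mul, ← setIntegral_const, ← integral_indicator]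
        · rfl
        · exact measurable_prodMk_left hD

/- Mark each sample `x i` independently with probability `β (x i)`. On `E`, either no sample is
marked, or some marked sample is completed to `E` by the `k` others. -/
lemma measureReal_pi_le_of_isPermInvariant (hE : MeasurableSet E) (hsymm : IsPermInvariant E)
    {β : Ω → ℝ} (hβ : Integrable β ν) (h0 : ∀ x, 0 ≤ β x) (h1 : ∀ x, β x ≤ 1) :
    (Measure.pi fun _ ↦ ν).real E ≤
      (1 - ∫ x, β x ∂ν) ^ (k + 1) + (k + 1) * ∫ x, β x * completionProb ν E x ∂ν := by
  set P : Measure (Fin (k + 1) → Ω) := Measure.pi fun _ ↦ ν with hP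
  have hsum : Integrable (fun x ↦ ∑ i, β (x i)) P :=
    integrable_finsetSum _ fun i _ ↦ integrable_comp_eval hβ
  have hprod : Integrable (fun x : Fin (k + 1) → Ω ↦ ∏ i, (1 - β (x i))) P :=
    .fintype_prod (f := fun _ a ↦ 1 - β a) fun _ ↦ (integrable_const 1).sub hβ
  calc P.real E = ∫ _ in E, 1 ∂P := by simp
    _ ≤ ∫ x in E, (∏ i, (1 - β (x i)) + ∑ i, β (x i)) ∂P :=
        setIntegral_mono (integrable_const 1).integrableOn (hprod.add hsum).integrableOn
          fun x ↦ one_le_prod_one_sub_add_sum (fun i ↦ h0 (x i)) fun i ↦ h1 (x i)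
    _ = ∫ x in E, ∏ i, (1 - β (x i)) ∂P + ∑ i, ∫ x in E, β (x i) ∂P := by
        rw [integral_add hprod.integrableOn hsum.integrableOn,
          integral_finsetSum _ fun i _ ↦ (integrable_comp_eval hβ).integrableOn]
    _ ≤ ∫ x, ∏ i, (1 - β (x i)) ∂P + ∑ i, ∫ x in E, β (x i) ∂P := by
        refine add_le_add_left (setIntegral_le_integral hprod <| .of_forall fun x ↦ ?_) _
        exact Finset.prod_nonneg fun i _ ↦ sub_nonneg.2 (h1 (x i))
    _ = (1 - ∫ x, β x ∂ν) ^ (k + 1) + (k + 1) * ∫ x, β x * completionProb ν E x ∂ν := by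
        rw [hP, integral_fintype_prod_eq_pow (fun a ↦ 1 - β a),
          integral_sub (integrable_const 1) hβ]
        simp [setIntegral_comp_eval_eq hE hsymm hβ]

lemma measureReal_pi_le_of_le_measureReal_completionProb_lt (hE : MeasurableSet E)
    (hsymm : IsPermInvariant E) {δ η : ℝ} (hδ : 0 < δ)
    (hlow : δ ≤ ν.real {x | completionProb ν E x < η}) :
    (Measure.pi fun _ ↦ ν).real E ≤ (1 - δ) ^ (k + 1) + (k + 1) * (δ * η) := by
  set B := {x | completionProb ν E x < η}
  have hB : MeasurableSet B := measurableSet_lt (measurable_completionProb hE) measurable_const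
  have hBpos : 0 < ν.real B := hδ.trans_le hlow
  -- Marking points of `B` only fractionally makes the marked mass exactly `δ`.
  set c := δ / ν.real B
  have hc0 : 0 ≤ c := by positivity
  have hc1 : c ≤ 1 := (div_le_one hBpos).2 hlow
  have hβ : Integrable (B.indicator fun _ ↦ c) ν := (integrable_const c).indicator hB
  have hβ0 (x : Ω) : 0 ≤ B.indicator (fun _ ↦ c) x := Set.indicator_nonneg (fun _ _ ↦ hc0) x
  have hβ1 (x : Ω) : B.indicator (fun _ ↦ c) x ≤ 1 :=
    (Set.indicator_le_self' (fun _ _ ↦ hc0) x).trans hc1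
  have hβδ : ∫ x, B.indicator (fun _ ↦ c) x ∂ν = δ := by
    rw [integral_indicator hB, setIntegral_const, smul_eq_mul, mul_div_cancel₀ _ hBpos.ne']
  have hβη : ∫ x, B.indicator (fun _ ↦ c) x * completionProb ν E x ∂ν ≤ δ * η := by
    rw [← hβδ, ← integral_mul_const]
    refine integral_mono_of_nonneg (.of_forall fun x ↦ mul_nonneg (hβ0 x) measureReal_nonneg)
      (hβ.mul_const η) (.of_forall fun x ↦ ?_)
    by_cases hx : x ∈ B
    · exact mul_le_mul_of_nonneg_left (le_of_lt hx) (hβ0 x)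
    · simp [hx]
  calc (Measure.pi fun _ ↦ ν).real E ≤ _ :=
        measureReal_pi_le_of_isPermInvariant hE hsymm hβ hβ0 hβ1
    _ ≤ (1 - δ) ^ (k + 1) + (k + 1) * (δ * η) := by rw [hβδ]; gcongr

lemma measureReal_pi_forall_notMem {α ι : Type*} [MeasurableSpace α] [Fintype ι] {μ : Measure α}
    [IsProbabilityMeasure μ] {A : Set α} (hA : MeasurableSet A) :
    (Measure.pi fun _ : ι ↦ μ).real {S | ∀ j, S j ∉ A} = (1 - μ.real A) ^ Fintype.card ι := by
  have hpi : {S : ι → α | ∀ j, S j ∉ A} = Set.univ.pi fun _ ↦ Aᶜ := by ext; simp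
  rw [← probReal_compl_eq_one_sub hA, hpi]
  simp [Measure.real, Measure.pi_pi]

lemma measurableSet_forall_cons_notMem (hE : MeasurableSet E) :
    MeasurableSet
      {p : (Fin m → Fin k → Ω) × Ω | ∀ j, (Fin.cons p.2 (p.1 j) : Fin (k + 1) → Ω) ∉ E} := by
  rw [Set.ofPred_forall]
  exact .iInter fun j ↦ (measurable_cons.comp
    (measurable_snd.prodMk ((measurable_pi_apply j).comp measurable_fst)) hE).compl

lemma integrable_missProb (hE : MeasurableSet E) (P : Measure (Fin m → Fin k → Ω))
    [IsFiniteMeasure P] : Integrable (missProb ν E) P :=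
  .of_mem_Icc 0 1
    (measurable_measure_prodMk_left
      (measurableSet_forall_cons_notMem hE)).ennreal_toReal.aemeasurable
    (.of_forall fun _ ↦ ⟨measureReal_nonneg, measureReal_le_one⟩)

lemma integral_missProb_eq (hE : MeasurableSet E) :
    ∫ S : Fin m → Fin k → Ω, missProb ν E S ∂(Measure.pi fun _ ↦ Measure.pi fun _ ↦ ν) =
      ∫ x, (1 - completionProb ν E x) ^ m ∂ν := by
  refine (measureReal_prod_eq_integral (measurableSet_forall_cons_notMem hE)).symm.trans ?_
  rw [measureReal_prod_eq_integral_symm (measurableSet_forall_cons_notMem hE)]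
  congr 1 with x
  have hx : MeasurableSet {s : Fin k → Ω | (Fin.cons x s : Fin (k + 1) → Ω) ∈ E} :=
    (measurable_cons.comp measurable_prodMk_left) hE
  have hmiss := measureReal_pi_forall_notMem (ι := Fin m) (μ := Measure.pi fun _ : Fin k ↦ ν) hx
  rwa [Fintype.card_fin] at hmiss

lemma integral_missProb_le (hE : MeasurableSet E) {η : ℝ} (hη : η ≤ 1) :
    ∫ S : Fin m → Fin k → Ω, missProb ν E S ∂(Measure.pi fun _ ↦ Measure.pi fun _ ↦ ν) ≤
      ν.real {x | completionProb ν E x < η} + (1 - η) ^ m := by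
  set B := {x | completionProb ν E x < η}
  have hB : MeasurableSet B := measurableSet_lt (measurable_completionProb hE) measurable_const
  have hind : Integrable (B.indicator (1 : Ω → ℝ)) ν := (integrable_const 1).indicator hB
  have h0 (x : Ω) : 0 ≤ 1 - completionProb ν E x := sub_nonneg.2 measureReal_le_one
  have hpow (x : Ω) : (1 - completionProb ν E x) ^ m ≤ B.indicator 1 x + (1 - η) ^ m := by
    by_cases hx : x ∈ B
    · rw [Set.indicator_of_mem hx]
      exact (pow_le_one₀ (h0 x) (sub_le_self 1 measureReal_nonneg)).trans
        (le_add_of_nonneg_right (pow_nonneg (sub_nonneg.2 hη) m))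
    · rw [Set.indicator_of_notMem hx, zero_add]
      exact pow_le_pow_left₀ (h0 x) (sub_le_sub_left (not_lt.1 hx) 1) m
  calc _ = ∫ x, (1 - completionProb ν E x) ^ m ∂ν := integral_missProb_eq hE
    _ ≤ ∫ x, (B.indicator 1 x + (1 - η) ^ m) ∂ν :=
        integral_mono_of_nonneg (.of_forall fun x ↦ pow_nonneg (h0 x) m)
          (hind.add (integrable_const _)) (.of_forall hpow)
    _ = ν.real B + (1 - η) ^ m := by
        rw [integral_add hind (integrable_const _), integral_indicator_one hB]
        simp

lemma measureReal_completionProb_lt_le (hE : MeasurableSet E) (hsymm : IsPermInvariant E)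
    (hhalf : 1 / 2 ≤ (Measure.pi fun _ ↦ ν).real E) {δ : ℝ} (hk3 : 3 ≤ (k + 1) * δ)
    (hk4 : (k + 1) * δ ≤ 4) : ν.real {x | completionProb ν E x < 1 / 20} ≤ δ := by
  by_contra! hlow
  have hδ : 0 < δ := pos_of_mul_pos_right (by linarith : 0 < (k + 1) * δ) (by positivity)
  have hδ1 : δ ≤ 1 := hlow.le.trans measureReal_le_one
  have hexp : (1 - δ) ^ (k + 1) ≤ 1 / 4 := calc
    (1 - δ) ^ (k + 1) ≤ Real.exp (-δ) ^ (k + 1) :=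
      pow_le_pow_left₀ (sub_nonneg.2 hδ1) (Real.one_sub_le_exp_neg δ) _
    _ = Real.exp (-((k + 1) * δ)) := by rw [← Real.exp_nat_mul]; push_cast; ring_nf
    _ ≤ Real.exp (-3) := Real.exp_le_exp.2 (by linarith)
    _ ≤ 1 / 4 := by
      rw [Real.exp_neg, inv_eq_one_div]
      exact one_div_le_one_div_of_le (by norm_num) (by linarith [Real.add_one_le_exp 3])
  have := measureReal_pi_le_of_le_measureReal_completionProb_lt hE hsymm hδ hlow.le
  linarith

lemma measureReal_le_missProb_le (hE : MeasurableSet E) (hsymm : IsPermInvariant E)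
    (hhalf : 1 / 2 ≤ (Measure.pi fun _ ↦ ν).real E) {ε : ℝ} (hε : 0 < ε)
    (hk3 : 3 ≤ (k + 1) * (ε / 32)) (hk4 : (k + 1) * (ε / 32) ≤ 4)
    (hm : (1 - 1 / 20 : ℝ) ^ m ≤ ε / 32) :
    (Measure.pi fun _ : Fin m ↦ Measure.pi fun _ : Fin k ↦ ν).real
      {S | ε / 2 ≤ missProb ν E S} ≤ 1 / 8 := by
  have hmarkov := mul_meas_ge_le_integral_of_nonneg (f := missProb ν E)
    (μ := Measure.pi fun _ : Fin m ↦ Measure.pi fun _ : Fin k ↦ ν)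
    (.of_forall fun S ↦ measureReal_nonneg) (integrable_missProb hE _) (ε / 2)
  have hint := integral_missProb_le (ν := ν) (m := m) hE (by norm_num : (1 / 20 : ℝ) ≤ 1)
  have hlow := measureReal_completionProb_lt_le hE hsymm hhalf hk3 hk4
  refine le_of_mul_le_mul_left ?_ (half_pos hε)
  linarith

end Samples

lemma exists_le_two_mul_and_le_two_mul {α : Type*} [MeasurableSpace α] {μ : Measure α}
    [IsProbabilityMeasure μ] {f g : α → ℝ} (hf : Integrable f μ) (hg : Integrable g μ)
    (hf0 : ∀ x, 0 ≤ f x) (hg0 : ∀ x, 0 ≤ g x) {a b : ℝ} (ha : 0 < a) (hb : 0 < b)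
    (hfa : ∫ x, f x ∂μ ≤ a) (hgb : ∫ x, g x ∂μ ≤ b) : ∃ x, f x ≤ 2 * a ∧ g x ≤ 2 * b := by
  obtain ⟨x, hx⟩ := exists_le_integral ((hf.div_const a).add (hg.div_const b))
  have hsum : f x / a + g x / b ≤ 2 := by
    simp only [Pi.add_apply] at hx
    rw [integral_add (hf.div_const a) (hg.div_const b), integral_div, integral_div] at hx
    linarith [(div_le_one ha).2 hfa, (div_le_one hb).2 hgb]
  have hfx : 0 ≤ f x / a := div_nonneg (hf0 x) ha.le
  have hgx : 0 ≤ g x / b := div_nonneg (hg0 x) hb.le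
  exact ⟨x, (div_le_iff₀ ha).1 (by linarith), (div_le_iff₀ hb).1 (by linarith)⟩

lemma exists_half_le_measureReal_half_le {Y Z : Type*} [MeasurableSpace Y] [MeasurableSpace Z]
    (ρ : Measure Y) [IsProbabilityMeasure ρ] (ζ : Measure Z) [IsProbabilityMeasure ζ]
    (F : Y → Z → Bool) : ∃ b, 1 / 2 ≤ ρ.real {y | 1 / 2 ≤ ζ.real {z | F y z = b}} := by
  have hζ (y : Y) : 1 ≤ ζ.real {z | F y z = true} + ζ.real {z | F y z = false} := by
    refine (probReal_univ (μ := ζ)).symm.le.trans <|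
      (measureReal_mono fun z _ ↦ ?_).trans (measureReal_union_le _ _)
    simp
  have hρ : 1 ≤ ρ.real {y | 1 / 2 ≤ ζ.real {z | F y z = true}} +
      ρ.real {y | 1 / 2 ≤ ζ.real {z | F y z = false}} := by
    refine (probReal_univ (μ := ρ)).symm.le.trans <|
      (measureReal_mono fun y _ ↦ ?_).trans (measureReal_union_le _ _)
    by_contra! hy
    simp only [Set.mem_union, Set.mem_ofPred_eq, not_or, not_le] at hy
    linarith [hζ y, hy.1, hy.2]
  by_contra! h
  linarith [h true, h false]

section PooledCoalition

variable {κ : Type*} {k m : ℕ}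

/-- The event that `g` takes the value `b` at the coordinatewise OR (the supremum in `κ → Bool`) of
`k` samples. -/
def joinEvent (g : (κ → Bool) → Bool) (b : Bool) (k : ℕ) : Set (Fin k → κ → Bool) :=
  {x | g (⨆ i, x i) = b}

lemma isPermInvariant_joinEvent (g : (κ → Bool) → Bool) (b : Bool) (k : ℕ) :
    IsPermInvariant (joinEvent g b k) := fun σ x ↦ by
  simp only [joinEvent, Set.mem_ofPred_eq, Function.comp_apply, σ.iSup_comp (g := x)]

variable [Fintype κ]

/-- The coordinates that are `1` in one of the samples of the blocks `S`: the coalition that can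
join any given point with any of the blocks. -/
def pooledOnes (S : Fin m → Fin k → κ → Bool) : Finset κ := {i | ∃ j l, S j l i = true}

lemma integral_card_pooledOnes_le (νs : κ → Measure Bool) [∀ i, IsProbabilityMeasure (νs i)] :
    ∫ S : Fin m → Fin k → κ → Bool, ((pooledOnes S).card : ℝ)
        ∂(Measure.pi fun _ ↦ Measure.pi fun _ ↦ Measure.pi νs) ≤
      m * (k * ∑ i, (νs i).real {true}) := by
  set P : Measure (Fin m → Fin k → κ → Bool) :=
    Measure.pi fun _ ↦ Measure.pi fun _ ↦ Measure.pi νs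
  have hcoord (j : Fin m) (l : Fin k) (i : κ) :
      P.real {S | S j l i = true} = (νs i).real {true} :=
    (((measurePreserving_eval νs i).comp (measurePreserving_eval (fun _ ↦ Measure.pi νs) l)).comp
      (measurePreserving_eval (fun _ ↦ Measure.pi fun _ ↦ Measure.pi νs) j)).measureReal_preimage
      (MeasurableSet.singleton true).nullMeasurableSet
  calc ∫ S, ((pooledOnes S).card : ℝ) ∂P
      = ∫ S, ∑ i, {S | ∃ j l, S j l i = true}.indicator 1 S ∂P := by
        congr 1 with S
        simp [pooledOnes, Set.indicator_apply]
    _ = ∑ i, P.real (⋃ j, ⋃ l, {S | S j l i = true}) := by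
        rw [integral_finsetSum _ fun i _ ↦ .of_finite]
        simp only [integral_indicator_one .of_discrete, Set.ofPred_exists]
    _ ≤ ∑ i, ∑ j, ∑ l, P.real {S | S j l i = true} := by
        gcongr with i
        refine (measureReal_iUnion_fintype_le _).trans ?_
        gcongr
        exact measureReal_iUnion_fintype_le _
    _ = m * (k * ∑ i, (νs i).real {true}) := by
        simp [hcoord, Finset.mul_sum]

lemma one_sub_missProb_le_infl (ν : Measure (κ → Bool)) [IsProbabilityMeasure ν]
    (g : (κ → Bool) → Bool) (b : Bool) (S : Fin m → Fin k → κ → Bool) :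
    1 - missProb ν (joinEvent g b (k + 1)) S ≤ infl ν g (pooledOnes S) b := by
  rw [missProb, ← probReal_compl_eq_one_sub .of_discrete]
  refine measureReal_mono fun x hx ↦ ?_
  simp only [Set.mem_compl_iff, Set.mem_ofPred_eq, not_forall, not_not] at hx
  obtain ⟨j, hj⟩ := hx
  refine ⟨_, fun i hi ↦ ?_, hj⟩
  have hoff : ∀ l, S j l i = false := by
    simp only [pooledOnes, Finset.mem_filter_univ, not_exists, Bool.not_eq_true] at hi
    exact hi j
  rw [iSup_apply]
  refine le_antisymm (iSup_le (Fin.cases le_rfl fun l ↦ ?_)) (le_iSup_of_le 0 le_rfl)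
  simp [hoff]

end PooledCoalition

lemma exists_coalition {Y κ : Type*} [MeasurableSpace Y] [Fintype κ] (ρ : Measure Y)
    [IsProbabilityMeasure ρ] (νs : κ → Measure Bool) [∀ i, IsProbabilityMeasure (νs i)]
    {F : Y → (κ → Bool) → Bool} (hF : Measurable F) {M : ℝ} (hM : ∑ i, (νs i).real {true} ≤ M)
    (hM0 : 0 < M) {ε : ℝ} (hε : 0 < ε) {k m : ℕ} (hk : 0 < k) (hm0 : 0 < m)
    (hk3 : 3 ≤ (k + 1) * (ε / 32)) (hk4 : (k + 1) * (ε / 32) ≤ 4)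
    (hm : (1 - 1 / 20 : ℝ) ^ m ≤ ε / 32) :
    ∃ (b : Bool) (S : Finset κ), (S.card : ℝ) ≤ 2 * (m * (k * M)) ∧
      1 / 4 ≤ ρ.real {y | 1 - ε / 2 ≤ infl (Measure.pi νs) (F y) S b} := by
  set ν := Measure.pi νs
  set ζ : Measure (Fin (k + 1) → κ → Bool) := Measure.pi fun _ ↦ ν
  set P : Measure (Fin m → Fin k → κ → Bool) := Measure.pi fun _ ↦ Measure.pi fun _ ↦ ν
  obtain ⟨b, hb⟩ := exists_half_le_measureReal_half_le ρ ζ fun y x ↦ F y (⨆ i, x i)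
  set E : Y → Set (Fin (k + 1) → κ → Bool) := fun y ↦ joinEvent (F y) b (k + 1)
  set favours := {y | 1 / 2 ≤ ζ.real (E y)}
  set misses := {p : (Fin m → Fin k → κ → Bool) × Y |
    p.2 ∈ favours ∧ ε / 2 ≤ missProb ν (E p.2) p.1}
  have hmisses : MeasurableSet misses :=
    measurable_fst.prodMk (hF.comp measurable_snd) <| .of_discrete
      (s := {p : (Fin m → Fin k → κ → Bool) × ((κ → Bool) → Bool) |
        1 / 2 ≤ ζ.real (joinEvent p.2 b _) ∧ ε / 2 ≤ missProb ν (joinEvent p.2 b _) p.1})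
  have hmiss (y : Y) : P.real {S | (S, y) ∈ misses} ≤ 1 / 8 := by
    by_cases hy : y ∈ favours
    · refine (measureReal_mono fun S hS ↦ hS.2).trans
        (measureReal_le_missProb_le .of_discrete (isPermInvariant_joinEvent (F y) b _) hy hε
          hk3 hk4 hm)
    · simp [misses, hy]
  obtain ⟨S, hcard, hSmiss⟩ := exists_le_two_mul_and_le_two_mul (μ := P) (.of_finite) (.of_finite)
    (fun S ↦ Nat.cast_nonneg (pooledOnes S).card) (fun S ↦ measureReal_nonneg)
    (by positivity : 0 < m * (k * M)) (by norm_num)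
    ((integral_card_pooledOnes_le νs).trans (by gcongr))
    (integral_measureReal_le_of_forall_measureReal_le (ν := ρ) hmisses hmiss)
  refine ⟨b, pooledOnes S, hcard, ?_⟩
  have hcover : favours ⊆
      {y | (S, y) ∈ misses} ∪ {y | 1 - ε / 2 ≤ infl ν (F y) (pooledOnes S) b} := fun y hy ↦ by
    rcases le_or_gt (ε / 2) (missProb ν (E y) S) with h | h
    · exact .inl ⟨hy, h⟩
    · exact .inr <| (sub_le_sub_left h.le 1).trans (one_sub_missProb_le_infl ν (F y) b S)
  have := hb.trans ((measureReal_mono hcover).trans (measureReal_union_le _ _))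
  linarith

lemma one_le_logb_two_one_div {ε : ℝ} (hε : 0 < ε) (hε' : ε ≤ 1 / 2) :
    1 ≤ Real.logb 2 (1 / ε) := by
  rw [Real.le_logb_iff_rpow_le one_lt_two (by positivity), Real.rpow_one, le_div_iff₀ hε]
  linarith

lemma exists_sampleSize {ε : ℝ} (hε : 0 < ε) (hε' : ε ≤ 1 / 2) :
    ∃ k : ℕ, 0 < k ∧ 3 ≤ (k + 1) * (ε / 32) ∧ (k + 1) * (ε / 32) ≤ 4 ∧ (k : ℝ) ≤ 96 / ε := by
  have hfloor : (⌊96 / ε⌋₊ : ℝ) ≤ 96 / ε := Nat.floor_le (by positivity)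
  have hmul : 96 / ε * (ε / 32) = 3 := by field_simp; norm_num
  refine ⟨⌊96 / ε⌋₊, Nat.floor_pos.2 ?_, ?_, ?_, hfloor⟩
  · rw [le_div_iff₀ hε]; linarith
  · rw [← hmul]
    exact mul_le_mul_of_nonneg_right (Nat.lt_floor_add_one _).le (by positivity)
  · linarith [mul_le_mul_of_nonneg_right hfloor (by positivity : 0 ≤ ε / 32)]

lemma exists_repetitions {ε : ℝ} (hε : 0 < ε) (hε' : ε ≤ 1 / 2) :
    ∃ m : ℕ, 0 < m ∧ (1 - 1 / 20 : ℝ) ^ m ≤ ε / 32 ∧ (m : ℝ) ≤ 121 * Real.logb 2 (1 / ε) := by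
  have hlogb := one_le_logb_two_one_div hε hε'
  have hlogb32 : Real.logb 2 (32 / ε) = 5 + Real.logb 2 (1 / ε) := by
    rw [div_eq_mul_one_div, Real.logb_mul (by norm_num) (by positivity),
      show (32 : ℝ) = 2 ^ 5 by norm_num, Real.logb_pow, Real.logb_self_eq_one one_lt_two]
    norm_num
  have hlog : Real.log (32 / ε) ≤ Real.logb 2 (32 / ε) := by
    refine le_div_self (Real.log_nonneg ?_) (Real.log_pos one_lt_two)
      (Real.log_two_lt_d9.le.trans (by norm_num))
    rw [le_div_iff₀ hε]; linarith
  have hceil := Nat.le_ceil (20 * Real.logb 2 (32 / ε))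
  have hceil_lt := Nat.ceil_lt_add_one (by linarith : 0 ≤ 20 * Real.logb 2 (32 / ε))
  refine ⟨⌈20 * Real.logb 2 (32 / ε)⌉₊, Nat.ceil_pos.2 (by linarith), ?_, by linarith⟩
  calc (1 - 1 / 20 : ℝ) ^ ⌈20 * Real.logb 2 (32 / ε)⌉₊
      ≤ Real.exp (-(1 / 20)) ^ ⌈20 * Real.logb 2 (32 / ε)⌉₊ :=
        pow_le_pow_left₀ (by norm_num) (Real.one_sub_le_exp_neg _) _
    _ = Real.exp (⌈20 * Real.logb 2 (32 / ε)⌉₊ * -(1 / 20)) := (Real.exp_nat_mul _ _).symm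
    _ ≤ Real.exp (-Real.log (32 / ε)) := Real.exp_le_exp.2 (by linarith)
    _ = ε / 32 := by rw [Real.exp_neg, Real.exp_log (by positivity), inv_div]

theorem biased_part_coalition_general :
    ∃ C : ℝ, 0 < C ∧
      ∀ ε : ℝ, 0 < ε → ε ≤ 1 / 2 →
      ∀ (Y κ : Type*) [MeasurableSpace Y] [Fintype κ],
      ∀ ρ : Measure Y, IsProbabilityMeasure ρ →
      ∀ νs : κ → Measure Bool, (∀ i, IsProbabilityMeasure (νs i)) →
      ∀ M : ℝ, 0 < M → ∑ i, (νs i).real {true} ≤ M →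
      ∀ F : Y → (κ → Bool) → Bool, Measurable F →
      ∃ (b₀ : Bool) (S : Finset κ),
        (S.card : ℝ) ≤ C * Real.logb 2 (1 / ε) * M / ε ∧
        1 / 4 ≤ ρ.real {y | 1 - ε / 2 ≤ infl (Measure.pi νs) (F y) S b₀} := by
  refine ⟨2 * 121 * 96, by norm_num, fun ε hε hε' Y κ _ _ ρ _ νs _ M hM0 hM F hF ↦ ?_⟩
  obtain ⟨k, hk, hk3, hk4, hkε⟩ := exists_sampleSize hε hε'
  obtain ⟨m, hm0, hm, hmε⟩ := exists_repetitions hε hε'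
  obtain ⟨b₀, S, hcard, hS⟩ := exists_coalition ρ νs hF hM hM0 hε hk hm0 hk3 hk4 hm
  refine ⟨b₀, S, ?_, hS⟩
  calc (S.card : ℝ) ≤ 2 * (m * (k * M)) := hcard
    _ ≤ 2 * (121 * Real.logb 2 (1 / ε) * (96 / ε * M)) := by
        gcongr
        linarith [one_le_logb_two_one_div hε hε']
    _ = 2 * 121 * 96 * Real.logb 2 (1 / ε) * M / ε := by ring

lemma sum_subtype_le_card_mul {ι : Type*} [Fintype ι] (p : ι → Prop) [DecidablePred p]
    {a : ι → ℝ} {c : ℝ} (hc : 0 ≤ c) (ha : ∀ i, p i → a i ≤ c) :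
    ∑ i : {i // p i}, a i ≤ Fintype.card ι * c := calc
  _ ≤ ∑ _i : {i // p i}, c := Finset.sum_le_sum fun i _ ↦ ha i i.2
  _ = Fintype.card {i // p i} * c := by simp
  _ ≤ Fintype.card ι * c := by gcongr; exact Fintype.card_subtype_le p

/-- with `A` the set of coordinates of bias `> 1/log n`, there are `b₀` and a
coalition `S ⊆ [n]∖A` of size `O(log(1/ε)·n/(ε·log n))` such that for a `μ|_A`-random `y`,
`I_S^{b₀}(f_y) ≥ 1 − ε/2` with probability at least `1/4`. -/
theorem biased_part_coalition :
    ∃ C : ℝ, C > 0 ∧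
      ∀ ε : ℝ, 0 < ε → ε ≤ 1/2 →
      ∀ n : ℕ, 16 ≤ n →
      ∀ μs : Fin n → Measure Bool, (∀ i, IsProbabilityMeasure (μs i)) →
      (∀ i, (μs i {true}).toReal ≤ 1/2) →
      ∀ f : (Fin n → Bool) → Bool,
      ∀ A : Finset (Fin n),
        A = Finset.univ.filter (fun i => 1 / Real.logb 2 n < (μs i {true}).toReal) →
      ∃ (b₀ : Bool) (S : Finset {j : Fin n // j ∉ A}),
        (S.card : ℝ) ≤ C * Real.logb 2 (1/ε) * n / (ε * Real.logb 2 n) ∧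
        ((Measure.pi fun i : {j : Fin n // j ∈ A} => μs i.val)
            {y | infl (Measure.pi fun i : {j : Fin n // j ∉ A} => μs i.val)
                (fun z => f (fun j => if h : j ∈ A then y ⟨j, h⟩ else z ⟨j, h⟩))
                S b₀ ≥ 1 - ε/2}).toReal ≥ 1/4 := by
  obtain ⟨C, hC, hgeneral⟩ := biased_part_coalition_general
  refine ⟨C, hC, fun ε hε hε' n hn μs _ _ f A hA ↦ ?_⟩
  have hlog : 0 < Real.logb 2 n := Real.logb_pos one_lt_two (by norm_cast; lia)
  have hbias (i : Fin n) (hi : i ∉ A) : (μs i {true}).toReal ≤ 1 / Real.logb 2 n := by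
    simpa [hA] using hi
  have hsum := sum_subtype_le_card_mul (· ∉ A) (by positivity) hbias
  rw [Fintype.card_fin] at hsum
  rw [div_mul_eq_div_div_swap, mul_div_assoc (C * _), div_eq_mul_one_div (n : ℝ)]
  exact hgeneral ε hε hε' _ _ _ inferInstance _ (fun _ ↦ inferInstance) _ (by positivity) hsum _
    .of_discrete
end
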